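/- arXiv:1901.09736 — 2 statements merged into one kernel-verified Lean document; each statement's English description precedes it below -/
import Mathlib

section
/- Under the Entropy Setup, with ρ̄ ∈ (0,1], there exists a constant M > 0 depending only on γ such that for all ρ > 0 and m ∈ ℝ with u = m/ρ, |η̃(ρ,m)| + ρ|η̃_ρ(ρ,m) + u η̃_m(ρ,m)| ≤ M(ρ|u|² + ρ + ρ^γ). -/
/-!
Write `u = m / ρ`, `c = ρ ^ θ` with `θ = (γ - 1) / 2`, and `μ = (1 - t²)₊ ^ r dt` with
`r = (3 - γ) / (2(γ - 1))`.
Substituting `s = u + c t` turns the entropy into `η̌(ρ, m) = ρ G(u, c)`, where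
`G(u, c) = ∫ ½ (u + c t)|u + c t| dμ(t)`. Since `s|s|` is `C¹` with a quadratic Taylor remainder,
`G` is differentiable, and along particle paths `η̌_ρ + u η̌_m = G + θ c G_c`, the derivative at
fixed `u`. As `μ` is finite and lives on `[-1, 1]`, both `G` and `c G_c` are `O(u² + c²)`, while
`ρ c² = ρ ^ γ`. Finally `η̌(·, 0) = 0` by oddness, so `η̃ = η̌ - b m` with `b = η̌_m(ρ̄, 0)` of size
`O(ρ̄ ^ θ)`, and `|b m|` is absorbed by the arithmetic-geometric mean inequality.
-/

open MeasureTheory Real Set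

noncomputable section

/-- The Lions–Perthame–Tadmor weak entropy
`η̌(ρ,m) = ∫_ℝ ½ s|s| [ρ^{2θ} − (m/ρ−s)²]_+^{(3−γ)/(2(γ−1))} ds`, with `2θ = γ−1`. -/
def etaCheck (γ ρ m : ℝ) : ℝ :=
  ∫ s : ℝ, (1/2) * s * |s| *
    (max (ρ ^ (γ - 1) - (m / ρ - s) ^ (2:ℕ)) 0) ^ ((3 - γ) / (2 * (γ - 1)))

/-- The associated weak entropy flux
`q̌(ρ,m) = ∫_ℝ ½ s|s| (θs + (1−θ)m/ρ) [ρ^{2θ} − (m/ρ−s)²]_+^{(3−γ)/(2(γ−1))} ds`. -/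
def qCheck (γ ρ m : ℝ) : ℝ :=
  ∫ s : ℝ, (1/2) * s * |s| * (((γ - 1)/2) * s + (1 - (γ - 1)/2) * (m / ρ)) *
    (max (ρ ^ (γ - 1) - (m / ρ - s) ^ (2:ℕ)) 0) ^ ((3 - γ) / (2 * (γ - 1)))

/-- Partial derivative `η̌_ρ` in the variables `(ρ,m)`. -/
def etaCheckRho (γ ρ m : ℝ) : ℝ := deriv (fun x => etaCheck γ x m) ρ

/-- Partial derivative `η̌_m` in the variables `(ρ,m)`. -/
def etaCheckM (γ ρ m : ℝ) : ℝ := deriv (fun y => etaCheck γ ρ y) m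

/-- The modified entropy `η̃(ρ,m) = η̌(ρ,m) − η̌_ρ(ρ̄,0)(ρ−ρ̄) − η̌_m(ρ̄,0)m`. -/
def etaTilde (γ ρbar ρ m : ℝ) : ℝ :=
  etaCheck γ ρ m - etaCheckRho γ ρbar 0 * (ρ - ρbar) - etaCheckM γ ρbar 0 * m

/-- The modified entropy flux
`q̃(ρ,m) = q̌(ρ,m) − η̌_ρ(ρ̄,0)m − η̌_m(ρ̄,0)(m²/ρ + p(ρ))`, `p(ρ) = κρ^γ`. -/
def qTilde (γ κ ρbar ρ m : ℝ) : ℝ :=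
  qCheck γ ρ m - etaCheckRho γ ρbar 0 * m
    - etaCheckM γ ρbar 0 * (m ^ (2:ℕ) / ρ + κ * ρ ^ γ)

/-- `η̃_ρ` in the variables `(ρ,m)`. -/
def etaTildeRho (γ ρbar ρ m : ℝ) : ℝ := deriv (fun x => etaTilde γ ρbar x m) ρ

/-- `η̃_m` in the variables `(ρ,m)`. -/
def etaTildeM (γ ρbar ρ m : ℝ) : ℝ := deriv (fun y => etaTilde γ ρbar ρ y) m

/-! ### Averages over a finite measure on `[-1, 1]` -/

lemma integrable_of_continuous_of_ae_mem_isCompact {X : Type*} [TopologicalSpace X] [T2Space X]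
    [MeasurableSpace X] [OpensMeasurableSpace X] {μ : Measure X} [IsFiniteMeasure μ] {K : Set X}
    {E : Type*} [NormedAddCommGroup E] (hK : IsCompact K) (hμ : ∀ᵐ x ∂μ, x ∈ K) {g : X → E}
    (hg : Continuous g) : Integrable g μ := by
  rw [← Measure.restrict_eq_self_of_ae_mem hμ]
  exact hg.continuousOn.integrableOn_compact hK

lemma integral_eq_zero_of_odd {G : Type*} [MeasurableSpace G] [AddGroup G] [MeasurableNeg G]
    {E : Type*} [NormedAddCommGroup E] [NormedSpace ℝ E]
    {μ : Measure G} [μ.IsNegInvariant] {f : G → E} (hf : Function.Odd f) : ∫ x, f x ∂μ = 0 := by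
  have h := integral_neg_eq_self f μ
  simp only [hf _, integral_neg] at h
  have : IsAddTorsionFree E := .of_isTorsionFree ℝ E
  exact self_eq_neg.1 h.symm

/-- The average `G(u, c) = ∫ ½ (u + c t)|u + c t| dμ(t)` at `p = (u, c)`: the entropy per unit mass
of a gas with velocity `u` and sound speed `c` whose kernel is `μ`. -/
def meanEntropy (μ : Measure ℝ) (p : ℝ × ℝ) : ℝ :=
  ∫ t, 1 / 2 * ((p.1 + p.2 * t) * |p.1 + p.2 * t|) ∂μ

lemma abs_mul_abs_sub_sub_le (a b : ℝ) :
    |b * |b| - a * |a| - 2 * |a| * (b - a)| ≤ (b - a) ^ 2 := by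
  rw [abs_le]
  rcases abs_cases a with ⟨ha, _⟩ | ⟨ha, _⟩ <;> rcases abs_cases b with ⟨hb, _⟩ | ⟨hb, _⟩ <;>
    rw [ha, hb] <;> constructor <;> nlinarith

lemma abs_add_mul_le {u c t : ℝ} (hc : 0 ≤ c) (ht : |t| ≤ 1) : |u + c * t| ≤ |u| + c :=
  calc |u + c * t| ≤ |u| + c * |t| := by
        simpa [abs_mul, abs_of_nonneg hc] using abs_add_le u (c * t)
    _ ≤ |u| + c := by gcongr; exact mul_le_of_le_one_right hc ht

section FiniteMeasure

variable {μ : Measure ℝ} [IsFiniteMeasure μ] (hμ : ∀ᵐ t ∂μ, |t| ≤ 1)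

include hμ

lemma integrable_of_continuous_of_ae_abs_le_one {g : ℝ → ℝ} (hg : Continuous g) :
    Integrable g μ :=
  integrable_of_continuous_of_ae_mem_isCompact isCompact_Icc (hμ.mono fun _ => abs_le.1) hg

lemma abs_integral_le_mul_measureReal_univ {g : ℝ → ℝ} {C : ℝ}
    (hg : ∀ t, |t| ≤ 1 → |g t| ≤ C) : |∫ t, g t ∂μ| ≤ C * μ.real univ := by
  rw [← norm_eq_abs]
  exact norm_integral_le_of_norm_le_const (hμ.mono hg)

lemma abs_meanEntropy_sub_sub_le (p q : ℝ × ℝ) :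
    |meanEntropy μ q - meanEntropy μ p
      - ((∫ t, |p.1 + p.2 * t| ∂μ) * (q.1 - p.1)
        + (∫ t, t * |p.1 + p.2 * t| ∂μ) * (q.2 - p.2))|
      ≤ 2 * ‖q - p‖ ^ 2 * μ.real univ := by
  have hint {g : ℝ → ℝ} (hg : Continuous g) : Integrable g μ :=
    integrable_of_continuous_of_ae_abs_le_one hμ hg
  have remainder_eq : meanEntropy μ q - meanEntropy μ p
      - ((∫ t, |p.1 + p.2 * t| ∂μ) * (q.1 - p.1)
        + (∫ t, t * |p.1 + p.2 * t| ∂μ) * (q.2 - p.2))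
      = ∫ t, 1 / 2 * ((q.1 + q.2 * t) * |q.1 + q.2 * t| - (p.1 + p.2 * t) * |p.1 + p.2 * t|
        - 2 * |p.1 + p.2 * t| * ((q.1 + q.2 * t) - (p.1 + p.2 * t))) ∂μ := by
    rw [meanEntropy, meanEntropy, ← integral_mul_const, ← integral_mul_const, ← integral_sub,
      ← integral_add, ← integral_sub]
    · congr with t
      ring
    all_goals exact hint (by fun_prop)
  rw [remainder_eq]
  refine abs_integral_le_mul_measureReal_univ hμ fun t ht => ?_
  have hfst : |q.1 - p.1| ≤ ‖q - p‖ := norm_fst_le (q - p)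
  have hsnd : |q.2 - p.2| ≤ ‖q - p‖ := norm_snd_le (q - p)
  have increment_le : |(q.1 + q.2 * t) - (p.1 + p.2 * t)| ≤ 2 * ‖q - p‖ :=
    calc |(q.1 + q.2 * t) - (p.1 + p.2 * t)| = |(q.1 - p.1) + (q.2 - p.2) * t| := by ring_nf
      _ ≤ |q.1 - p.1| + |q.2 - p.2| * |t| := by rw [← abs_mul]; exact abs_add_le _ _
      _ ≤ ‖q - p‖ + ‖q - p‖ * 1 := by gcongr
      _ = 2 * ‖q - p‖ := by ring
  calc _ = 1 / 2 * |(q.1 + q.2 * t) * |q.1 + q.2 * t| - (p.1 + p.2 * t) * |p.1 + p.2 * t|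
        - 2 * |p.1 + p.2 * t| * ((q.1 + q.2 * t) - (p.1 + p.2 * t))| := by
        rw [abs_mul, abs_of_pos one_half_pos]
    _ ≤ 1 / 2 * |(q.1 + q.2 * t) - (p.1 + p.2 * t)| ^ 2 := by
        rw [sq_abs]
        gcongr
        exact abs_mul_abs_sub_sub_le _ _
    _ ≤ 1 / 2 * (2 * ‖q - p‖) ^ 2 := by gcongr
    _ = 2 * ‖q - p‖ ^ 2 := by ring

lemma hasFDerivAt_meanEntropy (p : ℝ × ℝ) :
    HasFDerivAt (meanEntropy μ)
      ((∫ t, |p.1 + p.2 * t| ∂μ) • ContinuousLinearMap.fst ℝ ℝ ℝ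
        + (∫ t, t * |p.1 + p.2 * t| ∂μ) • ContinuousLinearMap.snd ℝ ℝ ℝ) p := by
  refine .of_isLittleO <| Asymptotics.IsBigO.trans_isLittleO
    (.of_bound (2 * μ.real univ) <| .of_forall fun q => ?_)
    (Asymptotics.isLittleO_pow_sub_sub p one_lt_two)
  rw [norm_pow, norm_norm, mul_right_comm]
  exact abs_meanEntropy_sub_sub_le hμ p q

variable {c : ℝ} (hc : 0 ≤ c) (u : ℝ)

include hc

lemma abs_meanEntropy_le : |meanEntropy μ (u, c)| ≤ (u ^ 2 + c ^ 2) * μ.real univ := by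
  refine abs_integral_le_mul_measureReal_univ hμ fun t ht => ?_
  calc |1 / 2 * ((u + c * t) * |u + c * t|)| = 1 / 2 * |u + c * t| ^ 2 := by
        rw [abs_mul, abs_mul, abs_abs, abs_of_pos one_half_pos, sq]
    _ ≤ 1 / 2 * (|u| + c) ^ 2 := by gcongr; exact abs_add_mul_le hc ht
    _ ≤ u ^ 2 + c ^ 2 := by nlinarith [sq_nonneg (|u| - c), sq_abs u]

lemma abs_integral_mul_abs_add_mul_le {g : ℝ → ℝ} (hg : ∀ t, |t| ≤ 1 → |g t| ≤ 1) :
    |∫ t, g t * |u + c * t| ∂μ| ≤ (|u| + c) * μ.real univ := by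
  refine abs_integral_le_mul_measureReal_univ hμ fun t ht => ?_
  rw [abs_mul, abs_abs, ← one_mul (|u| + c)]
  exact mul_le_mul (hg t ht) (abs_add_mul_le hc ht) (abs_nonneg _) zero_le_one

lemma abs_mul_integral_mul_abs_add_mul_le :
    |c * ∫ t, t * |u + c * t| ∂μ| ≤ 2 * (u ^ 2 + c ^ 2) * μ.real univ :=
  calc |c * ∫ t, t * |u + c * t| ∂μ| = c * |∫ t, t * |u + c * t| ∂μ| := by
        rw [abs_mul, abs_of_nonneg hc]
    _ ≤ c * ((|u| + c) * μ.real univ) := by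
        gcongr
        exact abs_integral_mul_abs_add_mul_le hμ hc u fun _ ht => ht
    _ = (c * (|u| + c)) * μ.real univ := by ring
    _ ≤ 2 * (u ^ 2 + c ^ 2) * μ.real univ := by
        refine mul_le_mul_of_nonneg_right ?_ measureReal_nonneg
        nlinarith [sq_nonneg (|u| - c), sq_abs u]

end FiniteMeasure

/-! ### The entropy kernel -/

/-- The measure `(1 - t²) ^ r dt` on `[-1, 1]`. -/
def kernelMeasure (r : ℝ) : Measure ℝ :=
  (volume.restrict (Icc (-1) 1)).withDensity fun t => ENNReal.ofReal ((1 - t ^ 2) ^ r)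

lemma ae_abs_le_one_kernelMeasure (r : ℝ) : ∀ᵐ t ∂kernelMeasure r, |t| ≤ 1 :=
  (withDensity_absolutelyContinuous _ _).ae_le <|
    (ae_restrict_mem measurableSet_Icc).mono fun _ => abs_le.2

lemma intervalIntegrable_one_sub_sq_rpow {r : ℝ} (hr : -1 < r) :
    IntervalIntegrable (fun t : ℝ => (1 - t ^ 2) ^ r) volume (-1) 1 := by
  have right_half : IntervalIntegrable (fun t : ℝ => (1 - t ^ 2) ^ r) volume 0 1 := by
    have singular : IntervalIntegrable (fun t : ℝ => (1 - t) ^ r) volume 0 1 := by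
      simpa using
        (intervalIntegral.intervalIntegrable_rpow' (a := 1) (b := 0) hr).comp_sub_left 1
    have regular : ContinuousOn (fun t : ℝ => (1 + t) ^ r) (uIcc 0 1) := by
      rw [uIcc_of_le zero_le_one]
      exact ContinuousOn.rpow_const (by fun_prop) fun t ht => .inl (by linarith [ht.1])
    refine (singular.mul_continuousOn regular).congr fun t ht => ?_
    rw [uIoc_of_le zero_le_one] at ht
    rw [← mul_rpow (by linarith [ht.2]) (by linarith [ht.1])]
    ring_nf
  have left_half : IntervalIntegrable (fun t : ℝ => (1 - t ^ 2) ^ r) volume (-1) 0 := by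
    simpa using (right_half.comp_sub_left 0).symm
  exact left_half.trans right_half

lemma isFiniteMeasure_kernelMeasure {r : ℝ} (hr : -1 < r) :
    IsFiniteMeasure (kernelMeasure r) := by
  have h := intervalIntegrable_one_sub_sq_rpow hr
  rw [intervalIntegrable_iff_integrableOn_Icc_of_le (by norm_num)] at h
  exact isFiniteMeasure_withDensity_ofReal h.hasFiniteIntegral

lemma integral_kernelMeasure {r : ℝ} (hr : r ≠ 0) (g : ℝ → ℝ) :
    ∫ t, g t ∂kernelMeasure r = ∫ t, g t * max (1 - t ^ 2) 0 ^ r := by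
  have vanish (t : ℝ) (ht : t ∉ Icc (-1 : ℝ) 1) : g t * max (1 - t ^ 2) 0 ^ r = 0 := by
    have hsq : 1 - t ^ 2 ≤ 0 := by
      rw [sub_nonpos, one_le_sq_iff_one_le_abs]
      exact (not_le.1 (mt abs_le.1 ht)).le
    rw [max_eq_right hsq, zero_rpow hr, mul_zero]
  rw [← setIntegral_eq_integral_of_forall_compl_eq_zero vanish, kernelMeasure,
    integral_withDensity_eq_integral_toReal_smul (by fun_prop) (by simp)]
  refine setIntegral_congr_fun measurableSet_Icc fun t ht => ?_
  have hsq : 0 ≤ 1 - t ^ 2 := sub_nonneg.2 (sq_le_one_iff_abs_le_one t |>.2 (abs_le.2 ht))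
  simp only [smul_eq_mul, max_eq_left hsq, ENNReal.toReal_ofReal (rpow_nonneg hsq r)]
  exact mul_comm _ _

lemma integral_mul_max_sq_sub_sq_rpow {r c : ℝ} (hr : r ≠ 0) (hc : 0 < c) (u : ℝ) (g : ℝ → ℝ) :
    ∫ s, g s * max (c ^ 2 - (u - s) ^ 2) 0 ^ r
      = c * (c ^ 2) ^ r * ∫ t, g (u + c * t) ∂kernelMeasure r := by
  have substitution (h : ℝ → ℝ) : ∫ s, h s = c * ∫ t, h (u + c * t) := by
    rw [Measure.integral_comp_mul_left (fun s => h (u + s)) c, integral_add_left_eq_self h u,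
      abs_of_pos (inv_pos.2 hc), smul_eq_mul, mul_inv_cancel_left₀ hc.ne']
  have scaling (t : ℝ) : max (c ^ 2 - (u - (u + c * t)) ^ 2) 0 ^ r
      = (c ^ 2) ^ r * max (1 - t ^ 2) 0 ^ r := by
    rw [← mul_rpow (sq_nonneg c) (le_max_right _ _), mul_max_of_nonneg _ _ (sq_nonneg c)]
    ring_nf
  rw [substitution, integral_kernelMeasure hr, mul_assoc, ← integral_const_mul ((c ^ 2) ^ r)]
  congr with t
  rw [scaling]
  ring

/-- The kernel measure of the Lions–Perthame–Tadmor entropies, with exponent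
`(3 - γ) / (2(γ - 1))`. -/
def entropyKernel (γ : ℝ) : Measure ℝ := kernelMeasure ((3 - γ) / (2 * (γ - 1)))

lemma ae_abs_le_one_entropyKernel (γ : ℝ) : ∀ᵐ t ∂entropyKernel γ, |t| ≤ 1 :=
  ae_abs_le_one_kernelMeasure _

lemma isFiniteMeasure_entropyKernel {γ : ℝ} (hγ : 1 < γ) : IsFiniteMeasure (entropyKernel γ) := by
  refine isFiniteMeasure_kernelMeasure ?_
  rw [lt_div_iff₀ (by linarith)]
  linarith

/-! ### The entropy and its derivatives -/

lemma etaCheck_zero_right (γ ρ : ℝ) : etaCheck γ ρ 0 = 0 :=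
  integral_eq_zero_of_odd fun s => by simp

lemma etaCheckRho_zero_right (γ ρ : ℝ) : etaCheckRho γ ρ 0 = 0 := by
  simp [etaCheckRho, etaCheck_zero_right]

lemma etaTilde_eq (γ ρbar ρ m : ℝ) :
    etaTilde γ ρbar ρ m = etaCheck γ ρ m - etaCheckM γ ρbar 0 * m := by
  simp [etaTilde, etaCheckRho_zero_right]

lemma etaTildeRho_eq (γ ρbar ρ m : ℝ) : etaTildeRho γ ρbar ρ m = etaCheckRho γ ρ m := by
  simp only [etaTildeRho, etaCheckRho, etaTilde_eq, deriv_sub_const]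

/-- At `γ = 3` the exponent is `0` and `0 ^ 0 = 1`, so the kernel is not truncated: the integrand
`½ s|s|` is not integrable, and the value is a junk one. -/
lemma etaCheck_three (ρ m : ℝ) : etaCheck 3 ρ m = 0 :=
  integral_eq_zero_of_odd fun s => by norm_num

lemma sq_rpow_half {ρ : ℝ} (hρ : 0 ≤ ρ) (a : ℝ) : (ρ ^ (a / 2)) ^ 2 = ρ ^ a := by
  rw [← rpow_mul_natCast hρ]
  norm_num

lemma etaCheck_eq_mul_meanEntropy {γ ρ : ℝ} (hγ : 1 < γ) (hγ3 : γ ≠ 3) (hρ : 0 < ρ) (m : ℝ) :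
    etaCheck γ ρ m = ρ * meanEntropy (entropyKernel γ) (m / ρ, ρ ^ ((γ - 1) / 2)) := by
  set r := (3 - γ) / (2 * (γ - 1)) with hr
  have hγ1 : γ - 1 ≠ 0 := by linarith
  have hr0 : r ≠ 0 := div_ne_zero (sub_ne_zero.2 hγ3.symm) (by linarith)
  have jacobian : ρ ^ ((γ - 1) / 2) * ((ρ ^ ((γ - 1) / 2)) ^ 2) ^ r = ρ := by
    have exponent : (γ - 1) / 2 + (γ - 1) * r = 1 := by
      rw [hr]
      field_simp
      ring
    rw [sq_rpow_half hρ.le, ← rpow_mul hρ.le, ← rpow_add hρ, exponent, rpow_one]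
  have change_of_variables := integral_mul_max_sq_sub_sq_rpow hr0
    (rpow_pos_of_pos hρ ((γ - 1) / 2)) (m / ρ) fun s => 1 / 2 * s * |s|
  rw [jacobian, sq_rpow_half hρ.le] at change_of_variables
  rw [etaCheck, meanEntropy, entropyKernel, ← hr, change_of_variables]
  simp only [mul_assoc]

section ChainRule

variable {G : ℝ × ℝ → ℝ} {a b ρ m θ : ℝ} (hρ : 0 < ρ)
  (hG : HasFDerivAt G (a • ContinuousLinearMap.fst ℝ ℝ ℝ + b • ContinuousLinearMap.snd ℝ ℝ ℝ)
    (m / ρ, ρ ^ θ))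

include hρ hG

lemma hasDerivAt_momentum_mul_comp : HasDerivAt (fun y => ρ * G (y / ρ, ρ ^ θ)) a m := by
  have curve : HasDerivAt (fun y : ℝ => (y / ρ, ρ ^ θ)) (1 / ρ, 0) m :=
    ((hasDerivAt_id m).div_const ρ).prodMk (hasDerivAt_const m _)
  refine ((hG.comp_hasDerivAt m curve).const_mul ρ).congr_deriv ?_
  simp [hρ.ne', mul_left_comm]

lemma hasDerivAt_density_mul_comp :
    HasDerivAt (fun x => x * G (m / x, x ^ θ))
      (G (m / ρ, ρ ^ θ) - m / ρ * a + θ * (ρ ^ θ * b)) ρ := by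
  have velocity : HasDerivAt (fun x : ℝ => m / x) (-(m / ρ ^ 2)) ρ := by
    simpa [div_eq_mul_inv] using (hasDerivAt_inv hρ.ne').const_mul m
  have soundSpeed : HasDerivAt (fun x : ℝ => x ^ θ) (θ * (ρ ^ θ / ρ)) ρ := by
    simpa [rpow_sub_one hρ.ne'] using hasDerivAt_rpow_const (p := θ) (.inl hρ.ne')
  refine ((hasDerivAt_id ρ).mul <| hG.comp_hasDerivAt ρ
    (f := fun x : ℝ => (m / x, x ^ θ)) (velocity.prodMk soundSpeed)).congr_deriv ?_
  simp only [add_apply, smul_apply, ContinuousLinearMap.coe_fst',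
    ContinuousLinearMap.coe_snd', smul_eq_mul, id, Function.comp]
  field_simp
  ring

end ChainRule

section Derivatives

variable {γ ρ : ℝ} (hγ : 1 < γ) (hγ3 : γ ≠ 3) (hρ : 0 < ρ) (m : ℝ)

include hγ hγ3 hρ

lemma hasDerivAt_etaCheck_momentum :
    HasDerivAt (fun y => etaCheck γ ρ y)
      (∫ t, |m / ρ + ρ ^ ((γ - 1) / 2) * t| ∂entropyKernel γ) m := by
  have := isFiniteMeasure_entropyKernel hγ
  simp only [etaCheck_eq_mul_meanEntropy hγ hγ3 hρ]
  exact hasDerivAt_momentum_mul_comp hρ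
    (hasFDerivAt_meanEntropy (ae_abs_le_one_entropyKernel γ) (m / ρ, ρ ^ ((γ - 1) / 2)))

lemma hasDerivAt_etaCheck_density :
    HasDerivAt (fun x => etaCheck γ x m)
      (meanEntropy (entropyKernel γ) (m / ρ, ρ ^ ((γ - 1) / 2))
        - m / ρ * (∫ t, |m / ρ + ρ ^ ((γ - 1) / 2) * t| ∂entropyKernel γ)
        + (γ - 1) / 2 * (ρ ^ ((γ - 1) / 2)
          * ∫ t, t * |m / ρ + ρ ^ ((γ - 1) / 2) * t| ∂entropyKernel γ)) ρ := by
  have := isFiniteMeasure_entropyKernel hγ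
  have hG := hasDerivAt_density_mul_comp hρ
    (hasFDerivAt_meanEntropy (ae_abs_le_one_entropyKernel γ) (m / ρ, ρ ^ ((γ - 1) / 2)))
  refine hG.congr_of_eventuallyEq ?_
  filter_upwards [lt_mem_nhds hρ] with x hx
  exact etaCheck_eq_mul_meanEntropy hγ hγ3 hx m

lemma etaCheckRho_add_mul_etaCheckM :
    etaCheckRho γ ρ m + m / ρ * etaCheckM γ ρ m
      = meanEntropy (entropyKernel γ) (m / ρ, ρ ^ ((γ - 1) / 2))
        + (γ - 1) / 2 * (ρ ^ ((γ - 1) / 2)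
          * ∫ t, t * |m / ρ + ρ ^ ((γ - 1) / 2) * t| ∂entropyKernel γ) := by
  rw [etaCheckRho, etaCheckM, (hasDerivAt_etaCheck_density hγ hγ3 hρ m).deriv,
    (hasDerivAt_etaCheck_momentum hγ hγ3 hρ m).deriv]
  ring

lemma etaTildeM_eq (ρbar : ℝ) :
    etaTildeM γ ρbar ρ m = etaCheckM γ ρ m - etaCheckM γ ρbar 0 := by
  have hη := (hasDerivAt_etaCheck_momentum hγ hγ3 hρ m).differentiableAt
  simp only [etaTildeM, etaTilde_eq]
  rw [deriv_fun_sub hη (by fun_prop), deriv_const_mul_id]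
  rfl

end Derivatives

/-! ### Growth bounds -/

section Bounds

variable {γ ρ : ℝ} (hγ : 1 < γ) (hγ3 : γ ≠ 3) (hρ : 0 < ρ) (m : ℝ)

include hγ hγ3 hρ

lemma abs_etaCheck_le :
    |etaCheck γ ρ m| ≤ (entropyKernel γ).real univ * (ρ * |m / ρ| ^ 2 + ρ ^ γ) := by
  have := isFiniteMeasure_entropyKernel hγ
  have hG := abs_meanEntropy_le (ae_abs_le_one_entropyKernel γ)
    (rpow_nonneg hρ.le ((γ - 1) / 2)) (m / ρ)
  rw [sq_rpow_half hρ.le, ← sq_abs (m / ρ)] at hG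
  rw [etaCheck_eq_mul_meanEntropy hγ hγ3 hρ, abs_mul, abs_of_pos hρ]
  calc _ ≤ ρ * ((|m / ρ| ^ 2 + ρ ^ (γ - 1)) * (entropyKernel γ).real univ) := by gcongr
    _ = _ := by
        rw [rpow_sub_one hρ.ne']
        field_simp

lemma mul_abs_etaCheckRho_add_le :
    ρ * |etaCheckRho γ ρ m + m / ρ * etaCheckM γ ρ m|
      ≤ γ * (entropyKernel γ).real univ * (ρ * |m / ρ| ^ 2 + ρ ^ γ) := by
  have := isFiniteMeasure_entropyKernel hγ
  have hθ : 0 ≤ (γ - 1) / 2 := by linarith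
  have hG := abs_meanEntropy_le (ae_abs_le_one_entropyKernel γ)
    (rpow_nonneg hρ.le ((γ - 1) / 2)) (m / ρ)
  have hcGc := abs_mul_integral_mul_abs_add_mul_le (ae_abs_le_one_entropyKernel γ)
    (rpow_nonneg hρ.le ((γ - 1) / 2)) (m / ρ)
  rw [sq_rpow_half hρ.le, ← sq_abs (m / ρ)] at hG hcGc
  rw [etaCheckRho_add_mul_etaCheckM hγ hγ3 hρ]
  calc _ ≤ ρ * ((|m / ρ| ^ 2 + ρ ^ (γ - 1)) * (entropyKernel γ).real univ + (γ - 1) / 2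
        * (2 * (|m / ρ| ^ 2 + ρ ^ (γ - 1)) * (entropyKernel γ).real univ)) := by
        gcongr
        refine (abs_add_le _ _).trans (add_le_add hG ?_)
        rw [abs_mul, abs_of_nonneg hθ]
        gcongr
    _ = _ := by
        rw [rpow_sub_one hρ.ne']
        field_simp
        ring

lemma abs_etaCheckM_zero_right_le :
    |etaCheckM γ ρ 0| ≤ ρ ^ ((γ - 1) / 2) * (entropyKernel γ).real univ := by
  have := isFiniteMeasure_entropyKernel hγ
  rw [etaCheckM, (hasDerivAt_etaCheck_momentum hγ hγ3 hρ 0).deriv]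
  simpa using abs_integral_mul_abs_add_mul_le (ae_abs_le_one_entropyKernel γ)
    (rpow_nonneg hρ.le ((γ - 1) / 2)) 0 (g := fun _ => 1) (by simp)

lemma two_mul_abs_etaCheckM_zero_right_mul_le {ρbar : ℝ} (hρbar : 0 < ρbar) :
    2 * |etaCheckM γ ρbar 0 * m|
      ≤ (entropyKernel γ).real univ * (ρ * |m / ρ| ^ 2 + ρbar ^ (γ - 1) * ρ) :=
  calc 2 * |etaCheckM γ ρbar 0 * m| = ρ * (2 * (|etaCheckM γ ρbar 0| * |m / ρ|)) := by
        rw [abs_mul, abs_div, abs_of_pos hρ]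
        field_simp
    _ ≤ ρ * (2 * (ρbar ^ ((γ - 1) / 2) * (entropyKernel γ).real univ * |m / ρ|)) := by
        gcongr
        exact abs_etaCheckM_zero_right_le hγ hγ3 hρbar
    _ = (entropyKernel γ).real univ * ρ * (2 * |m / ρ| * ρbar ^ ((γ - 1) / 2)) := by ring
    _ ≤ (entropyKernel γ).real univ * ρ * (|m / ρ| ^ 2 + (ρbar ^ ((γ - 1) / 2)) ^ 2) := by
        gcongr
        exact two_mul_le_add_sq _ _
    _ = _ := by
        rw [sq_rpow_half hρbar.le]
        ring

lemma abs_etaTilde_add_le {ρbar : ℝ} (hρbar : 0 < ρbar) :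
    |etaTilde γ ρbar ρ m| + ρ * |etaTildeRho γ ρbar ρ m + m / ρ * etaTildeM γ ρbar ρ m|
      ≤ (γ + 2) * (entropyKernel γ).real univ
        * (ρ * |m / ρ| ^ 2 + ρbar ^ (γ - 1) * ρ + ρ ^ γ) := by
  set W := (entropyKernel γ).real univ
  set D := etaCheckRho γ ρ m + m / ρ * etaCheckM γ ρ m with hD
  set b := etaCheckM γ ρbar 0 with hb
  have hη : |etaTilde γ ρbar ρ m| ≤ |etaCheck γ ρ m| + |b * m| := by
    rw [etaTilde_eq]
    exact abs_sub _ _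
  have hDη : ρ * |etaTildeRho γ ρbar ρ m + m / ρ * etaTildeM γ ρbar ρ m| ≤ ρ * |D| + |b * m| := by
    have convective_eq :
        ρ * (etaTildeRho γ ρbar ρ m + m / ρ * etaTildeM γ ρbar ρ m) = ρ * D - b * m := by
      rw [etaTildeRho_eq, etaTildeM_eq hγ hγ3 hρ, hD, ← hb]
      field_simp
      ring
    calc _ = |ρ * D - b * m| := by rw [← convective_eq, abs_mul, abs_of_pos hρ]
      _ ≤ |ρ * D| + |b * m| := abs_sub _ _
      _ = ρ * |D| + |b * m| := by rw [abs_mul, abs_of_pos hρ]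
  calc _ ≤ |etaCheck γ ρ m| + ρ * |D| + 2 * |b * m| := by linarith
    _ ≤ W * (ρ * |m / ρ| ^ 2 + ρ ^ γ) + γ * W * (ρ * |m / ρ| ^ 2 + ρ ^ γ)
        + W * (ρ * |m / ρ| ^ 2 + ρbar ^ (γ - 1) * ρ) :=
        add_le_add_three (abs_etaCheck_le hγ hγ3 hρ m) (mul_abs_etaCheckRho_add_le hγ hγ3 hρ m)
          (two_mul_abs_etaCheckM_zero_right_mul_le hγ hγ3 hρ m hρbar)
    _ ≤ _ := by
        have : 0 ≤ W * ρ ^ γ := by positivity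
        have : 0 ≤ (γ + 1) * W * (ρbar ^ (γ - 1) * ρ) := by positivity
        linarith

end Bounds

theorem etaTilde_bounds_general (γ : ℝ) (hγ : 1 < γ) :
    ∃ M : ℝ, 0 < M ∧ ∀ ρbar : ℝ, 0 < ρbar → ∀ ρ : ℝ, 0 < ρ → ∀ m : ℝ,
      |etaTilde γ ρbar ρ m| + ρ * |etaTildeRho γ ρbar ρ m + m / ρ * etaTildeM γ ρbar ρ m|
        ≤ M * (ρ * |m / ρ| ^ 2 + ρbar ^ (γ - 1) * ρ + ρ ^ γ) := by
  rcases eq_or_ne γ 3 with rfl | hγ3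
  · refine ⟨1, one_pos, fun ρbar hρbar ρ hρ m => ?_⟩
    simp only [etaTildeRho, etaTildeM, etaTilde, etaCheckRho, etaCheckM, etaCheck_three,
      deriv_const, zero_mul, sub_zero, mul_zero, add_zero, abs_zero, one_mul]
    positivity
  · refine ⟨(γ + 2) * (entropyKernel γ).real univ + 1, by positivity,
      fun ρbar hρbar ρ hρ m => (abs_etaTilde_add_le hγ hγ3 hρ m hρbar).trans ?_⟩
    gcongr
    exact le_add_of_nonneg_right zero_le_one

/-- there is `M > 0` depending only on `γ` such that for all `ρ̄ ∈ (0,1]`,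
`ρ > 0` and `m ∈ ℝ`, with `u = m/ρ`,
`|η̃(ρ,m)| + ρ|η̃_ρ(ρ,m) + u η̃_m(ρ,m)| ≤ M(ρ|u|² + ρ + ρ^γ)`. -/
theorem etaTilde_bounds (γ : ℝ) (hγ : 1 < γ) :
    ∃ M : ℝ, 0 < M ∧ ∀ ρbar ∈ Set.Ioc (0:ℝ) 1, ∀ ρ : ℝ, 0 < ρ → ∀ m : ℝ,
      |etaTilde γ ρbar ρ m|
        + ρ * |etaTildeRho γ ρbar ρ m + (m / ρ) * etaTildeM γ ρbar ρ m|
        ≤ M * (ρ * |m / ρ| ^ (2:ℕ) + ρ + ρ ^ γ) := by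
  obtain ⟨M, hM, hbound⟩ := etaTilde_bounds_general γ hγ
  refine ⟨M, hM, fun ρbar ⟨hρbar, hρbar_le⟩ ρ hρ m => (hbound ρbar hρbar ρ hρ m).trans ?_⟩
  gcongr
  exact mul_le_of_le_one_left hρ.le (rpow_le_one hρbar.le hρbar_le (by linarith))
end
end

section
/- Under the Entropy Setup, with ρ̄ ∈ (0,1], there exists a constant M > 0 depending only on γ such that for all ρ > 0 and m ∈ ℝ with u = m/ρ, |m η̃_m(ρ,m)| ≤ M(ρu² + ρ^γ + ρρ̄^{2θ}), where η̃_m(ρ,m) = η̌_m(ρ,m) − η̌_m(ρ̄,0). -/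
open MeasureTheory Real Set

noncomputable section

/-!
With `λ = (3 - γ) / (2 (γ - 1))` and `θ = (γ - 1) / 2`, the substitution `s = u + ρ^θ σ` gives
`η̌(ρ,m) = ρ ∫ ½ (u + ρ^θ σ) |u + ρ^θ σ| [1 - σ²]_+^λ dσ`, because `θ (2λ + 1) = 1`. Since
`½ s|s|` has derivative `|s|`, differentiating under the integral yields
`η̌_m(ρ,m) = ∫ |u + ρ^θ σ| [1 - σ²]_+^λ dσ`, so that `|η̌_m(ρ,m)| ≤ C (|u| + ρ^θ)` with
`C = ∫ [1 - σ²]_+^λ dσ`, finite as `λ > -1`. The bound on `m η̃_m` is then Young's inequality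
for `|u| (|u| + ρ^θ + ρ̄^θ)`.
-/

/-- The exponent `λ` of the Lions–Perthame–Tadmor entropy kernel. -/
def kernelExponent (γ : ℝ) : ℝ := (3 - γ) / (2 * (γ - 1))

/-- The entropy kernel `[1 - σ²]_+^l` at unit density and zero velocity. Since `0 ^ 0 = 1` for
`Real.rpow`, it vanishes outside `(-1, 1)` only when `l ≠ 0`. -/
def unitKernel (l σ : ℝ) : ℝ := (max (1 - σ ^ 2) 0) ^ l

lemma neg_one_lt_kernelExponent {γ : ℝ} (hγ : 1 < γ) : -1 < kernelExponent γ := by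
  rw [kernelExponent, lt_div_iff₀ (by linarith)]
  linarith

lemma kernelExponent_ne_zero {γ : ℝ} (hγ1 : γ ≠ 1) (hγ3 : γ ≠ 3) : kernelExponent γ ≠ 0 :=
  div_ne_zero (sub_ne_zero.mpr hγ3.symm) (mul_ne_zero two_ne_zero (sub_ne_zero.mpr hγ1))

lemma sq_rpow_half_s17 {x : ℝ} (hx : 0 ≤ x) (p : ℝ) : (x ^ (p / 2)) ^ 2 = x ^ p := by
  rw [← rpow_mul_natCast hx, Nat.cast_ofNat, div_mul_cancel₀ p two_ne_zero]

lemma rpow_half_mul_sq_rpow_kernelExponent {γ ρ : ℝ} (hγ : γ ≠ 1) (hρ : 0 < ρ) :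
    ρ ^ ((γ - 1) / 2) * ((ρ ^ ((γ - 1) / 2)) ^ 2) ^ kernelExponent γ = ρ := by
  have hexp : (γ - 1) / 2 + (γ - 1) * kernelExponent γ = 1 := by
    have : γ - 1 ≠ 0 := sub_ne_zero.mpr hγ
    rw [kernelExponent]
    field_simp
    ring
  rw [sq_rpow_half_s17 hρ.le, ← rpow_mul hρ.le, ← rpow_add hρ, hexp, rpow_one]

section UnitKernel

variable {l : ℝ}

lemma unitKernel_nonneg (l σ : ℝ) : 0 ≤ unitKernel l σ :=
  rpow_nonneg (le_max_right _ _) _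

lemma unitKernel_neg (l σ : ℝ) : unitKernel l (-σ) = unitKernel l σ := by
  rw [unitKernel, unitKernel, neg_sq]

lemma unitKernel_of_one_le_abs {σ : ℝ} (hl : l ≠ 0) (hσ : 1 ≤ |σ|) : unitKernel l σ = 0 := by
  have h : 1 - σ ^ 2 ≤ 0 := sub_nonpos.mpr ((one_le_sq_iff_one_le_abs σ).mpr hσ)
  rw [unitKernel, max_eq_right h, zero_rpow hl]

lemma unitKernel_of_abs_le_one {σ : ℝ} (hσ : |σ| ≤ 1) :
    unitKernel l σ = (1 + σ) ^ l * (1 - σ) ^ l := by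
  obtain ⟨hneg, hpos⟩ := abs_le.mp hσ
  have h : 0 ≤ 1 - σ ^ 2 := sub_nonneg.mpr ((sq_le_one_iff_abs_le_one σ).mpr hσ)
  rw [unitKernel, max_eq_left h, ← mul_rpow (by linarith) (by linarith)]
  ring_nf

lemma intervalIntegrable_unitKernel (hl : -1 < l) :
    IntervalIntegrable (unitKernel l) volume (-1) 1 := by
  have hsing : IntervalIntegrable (fun σ : ℝ => (1 - σ) ^ l) volume 0 1 := by
    simpa using
      ((intervalIntegral.intervalIntegrable_rpow' (a := 0) (b := 1) hl).comp_sub_left 1).symm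
  have hreg : ContinuousOn (fun σ : ℝ => (1 + σ) ^ l) (uIcc 0 1) := by
    rw [uIcc_of_le zero_le_one]
    exact ContinuousOn.rpow_const (by fun_prop) fun σ hσ => Or.inl (by linarith [hσ.1])
  have hright : IntervalIntegrable (unitKernel l) volume 0 1 := by
    refine (hsing.continuousOn_mul hreg).congr fun σ hσ => ?_
    rw [uIoc_of_le zero_le_one] at hσ
    exact (unitKernel_of_abs_le_one (abs_le.mpr ⟨by linarith [hσ.1], hσ.2⟩)).symm
  have hleft : IntervalIntegrable (unitKernel l) volume (-1) 0 := by
    simpa [unitKernel_neg] using (hright.comp_sub_left 0).symm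
  exact hleft.trans hright

lemma integrable_mul_unitKernel (hl : -1 < l) (hl0 : l ≠ 0) {g : ℝ → ℝ} (hg : Continuous g) :
    Integrable fun σ => g σ * unitKernel l σ := by
  have hon : IntegrableOn (fun σ => g σ * unitKernel l σ) (Ioc (-1) 1) := by
    rw [← intervalIntegrable_iff_integrableOn_Ioc_of_le (by norm_num)]
    exact (intervalIntegrable_unitKernel hl).continuousOn_mul hg.continuousOn
  refine (integrableOn_iff_integrable_of_support_subset fun σ hσ => ?_).mp hon
  have hσ' : |σ| < 1 := not_le.mp fun h => hσ (by simp [unitKernel_of_one_le_abs hl0 h])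
  exact Ioo_subset_Ioc_self (abs_lt.mp hσ')

lemma integrable_unitKernel (hl : -1 < l) (hl0 : l ≠ 0) : Integrable (unitKernel l) := by
  simpa using integrable_mul_unitKernel hl hl0 (g := fun _ => 1) continuous_const

lemma integral_abs_mul_unitKernel_le (hl : -1 < l) (hl0 : l ≠ 0) (u a : ℝ) :
    ∫ σ, |u + a * σ| * unitKernel l σ ≤ (|u| + |a|) * ∫ σ, unitKernel l σ := by
  rw [← integral_const_mul]
  refine integral_mono (integrable_mul_unitKernel hl hl0 (by fun_prop))
    ((integrable_unitKernel hl hl0).const_mul _) fun σ => ?_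
  rcases le_total 1 |σ| with hσ | hσ
  · simp [unitKernel_of_one_le_abs hl0 hσ]
  · refine mul_le_mul_of_nonneg_right ?_ (unitKernel_nonneg l σ)
    calc |u + a * σ| ≤ |u| + |a| * |σ| := by simpa [abs_mul] using abs_add_le u (a * σ)
      _ ≤ |u| + |a| := by grw [mul_le_of_le_one_right (abs_nonneg a) hσ]

lemma integral_mul_kernel_eq_integral_mul_unitKernel (g : ℝ → ℝ) (u l : ℝ) {a : ℝ} (ha : 0 < a) :
    ∫ s, g s * (max (a ^ 2 - (u - s) ^ 2) 0) ^ l =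
      a * (a ^ 2) ^ l * ∫ σ, g (u + a * σ) * unitKernel l σ := by
  have hscale : ∀ σ, (max (a ^ 2 - (a * σ) ^ 2) 0) ^ l = (a ^ 2) ^ l * unitKernel l σ := by
    intro σ
    rw [unitKernel, ← mul_rpow (sq_nonneg a) (le_max_right _ _),
      mul_max_of_nonneg _ _ (sq_nonneg a)]
    ring_nf
  calc ∫ s, g s * (max (a ^ 2 - (u - s) ^ 2) 0) ^ l
      = ∫ t, g (u + t) * (max (a ^ 2 - t ^ 2) 0) ^ l := by
        rw [← integral_add_left_eq_self _ u]
        simp only [sub_add_cancel_left, neg_sq]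
    _ = a * ∫ σ, g (u + a * σ) * (max (a ^ 2 - (a * σ) ^ 2) 0) ^ l := by
        rw [Measure.integral_comp_mul_left (fun t => g (u + t) * (max (a ^ 2 - t ^ 2) 0) ^ l),
          abs_of_pos (inv_pos.mpr ha), smul_eq_mul, mul_inv_cancel_left₀ ha.ne']
    _ = a * (a ^ 2) ^ l * ∫ σ, g (u + a * σ) * unitKernel l σ := by
        simp only [hscale, mul_left_comm _ ((a ^ 2) ^ l), integral_const_mul, mul_assoc]

end UnitKernel

lemma hasDerivAt_half_mul_abs (x : ℝ) : HasDerivAt (fun s : ℝ => 1 / 2 * s * |s|) |x| x := by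
  refine hasDerivAt_of_hasDerivAt_of_ne' (x := 0) (g := fun s => |s|) (fun y hy => ?_)
    (by fun_prop) (by fun_prop) x
  have h := ((hasDerivAt_id y).const_mul (1 / 2)).mul (hasDerivAt_abs hy)
  exact h.congr_deriv (by simp only [id]; linear_combination (1 / 2) * self_mul_sign y)

lemma hasDerivAt_integral_half_mul_abs {α : Type*} [MeasurableSpace α] {μ : Measure α}
    {f w : α → ℝ} {u : ℝ} (hf : AEStronglyMeasurable f μ) (hw : Integrable w μ)
    (hfw : Integrable (fun x => f x * w x) μ)
    (hu : Integrable (fun x => 1 / 2 * (u + f x) * |u + f x| * w x) μ) :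
    HasDerivAt (fun v => ∫ x, 1 / 2 * (v + f x) * |v + f x| * w x ∂μ)
      (∫ x, |u + f x| * w x ∂μ) u := by
  have hmeas := hw.aestronglyMeasurable
  refine (hasDerivAt_integral_of_dominated_loc_of_deriv_le
    (F' := fun v x => |v + f x| * w x)
    (bound := fun x => (|u| + 1) * |w x| + |f x * w x|) (Metric.ball_mem_nhds u one_pos)
    (.of_forall fun v => by fun_prop) hu (by fun_prop) (.of_forall fun x v hv => ?_)
    ((hw.abs.const_mul _).add hfw.abs) (.of_forall fun x v _ => ?_)).2
  · have hv' : |v| ≤ |u| + 1 := by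
      rw [Metric.mem_ball, Real.dist_eq] at hv
      linarith [abs_sub_abs_le_abs_sub v u]
    calc ‖|v + f x| * w x‖ = |v + f x| * |w x| := by rw [norm_eq_abs, abs_mul, abs_abs]
      _ ≤ (|u| + 1 + |f x|) * |w x| := by grw [abs_add_le v (f x), hv']
      _ = (|u| + 1) * |w x| + |f x * w x| := by rw [abs_mul]; ring
  · exact ((hasDerivAt_half_mul_abs (v + f x)).comp_add_const v (f x)).mul_const (w x)

lemma etaCheck_eq_mul_integral_unitKernel {γ ρ : ℝ} (hγ : γ ≠ 1) (hρ : 0 < ρ) (m : ℝ) :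
    etaCheck γ ρ m = ρ * ∫ σ, 1 / 2 * (m / ρ + ρ ^ ((γ - 1) / 2) * σ) *
      |m / ρ + ρ ^ ((γ - 1) / 2) * σ| * unitKernel (kernelExponent γ) σ := by
  have h := integral_mul_kernel_eq_integral_mul_unitKernel (fun s => 1 / 2 * s * |s|) (m / ρ)
    (kernelExponent γ) (rpow_pos_of_pos hρ ((γ - 1) / 2))
  rwa [rpow_half_mul_sq_rpow_kernelExponent hγ hρ, sq_rpow_half_s17 hρ.le] at h

lemma etaCheckM_eq_integral_abs_mul_unitKernel {γ ρ : ℝ} (hγ : 1 < γ) (hγ3 : γ ≠ 3) (hρ : 0 < ρ)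
    (m : ℝ) :
    etaCheckM γ ρ m =
      ∫ σ, |m / ρ + ρ ^ ((γ - 1) / 2) * σ| * unitKernel (kernelExponent γ) σ := by
  have hl := neg_one_lt_kernelExponent hγ
  have hl0 := kernelExponent_ne_zero hγ.ne' hγ3
  have hvel := hasDerivAt_integral_half_mul_abs (u := m / ρ)
    (f := fun σ => ρ ^ ((γ - 1) / 2) * σ) (by fun_prop) (integrable_unitKernel hl hl0)
    (integrable_mul_unitKernel hl hl0 (by fun_prop))
    (integrable_mul_unitKernel hl hl0 (by fun_prop))
  have hmom := (hvel.comp m ((hasDerivAt_id m).div_const ρ)).const_mul ρ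
  simp only [etaCheckM, etaCheck_eq_mul_integral_unitKernel hγ.ne' hρ]
  refine hmom.deriv.trans ?_
  field_simp

/-- For `γ = 3` the exponent is `0`; as `0 ^ 0 = 1`, the integrand of `etaCheck` does not depend
on `m`. -/
lemma etaCheckM_three (ρ m : ℝ) : etaCheckM 3 ρ m = 0 := by
  simp [etaCheckM, etaCheck]

lemma exists_abs_etaCheckM_le {γ : ℝ} (hγ : 1 < γ) :
    ∃ C : ℝ, 0 ≤ C ∧ ∀ ρ : ℝ, 0 < ρ → ∀ m : ℝ,
      |etaCheckM γ ρ m| ≤ C * (|m / ρ| + ρ ^ ((γ - 1) / 2)) := by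
  rcases eq_or_ne γ 3 with rfl | hγ3
  · exact ⟨0, le_rfl, fun ρ _ m => by simp [etaCheckM_three]⟩
  refine ⟨∫ σ, unitKernel (kernelExponent γ) σ, integral_nonneg (unitKernel_nonneg _),
    fun ρ hρ m => ?_⟩
  have hnonneg : 0 ≤ etaCheckM γ ρ m := by
    rw [etaCheckM_eq_integral_abs_mul_unitKernel hγ hγ3 hρ]
    exact integral_nonneg fun σ => mul_nonneg (abs_nonneg _) (unitKernel_nonneg _ σ)
  have hle := integral_abs_mul_unitKernel_le (neg_one_lt_kernelExponent hγ)
    (kernelExponent_ne_zero hγ.ne' hγ3) (m / ρ) (ρ ^ ((γ - 1) / 2))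
  rwa [← etaCheckM_eq_integral_abs_mul_unitKernel hγ hγ3 hρ,
    abs_of_pos (rpow_pos_of_pos hρ _), mul_comm, ← abs_of_nonneg hnonneg] at hle

lemma mul_add_add_le_two_mul_sq_add_sq_add_sq (v a b : ℝ) :
    v * (v + a + b) ≤ 2 * (v ^ 2 + a ^ 2 + b ^ 2) := by
  linarith [two_mul_le_add_sq v a, two_mul_le_add_sq v b, sq_nonneg a, sq_nonneg b]

theorem m_etaTildeM_bound_general {γ : ℝ} (hγ : 1 < γ) :
    ∃ M : ℝ, 0 < M ∧ ∀ ρbar : ℝ, 0 < ρbar → ∀ ρ : ℝ, 0 < ρ → ∀ m : ℝ,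
      |m * (etaCheckM γ ρ m - etaCheckM γ ρbar 0)|
        ≤ M * (ρ * (m / ρ) ^ 2 + ρ ^ γ + ρ * ρbar ^ (γ - 1)) := by
  obtain ⟨C, hC, hbound⟩ := exists_abs_etaCheckM_le hγ
  refine ⟨2 * C + 1, by positivity, fun ρbar hρbar ρ hρ m => ?_⟩
  have hm : |m| = ρ * |m / ρ| := by rw [abs_div, abs_of_pos hρ, mul_div_cancel₀ _ hρ.ne']
  have hdiff : |etaCheckM γ ρ m - etaCheckM γ ρbar 0|
      ≤ C * (|m / ρ| + ρ ^ ((γ - 1) / 2) + ρbar ^ ((γ - 1) / 2)) := by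
    have hbar := hbound ρbar hρbar 0
    rw [zero_div, abs_zero, zero_add] at hbar
    linarith [abs_sub (etaCheckM γ ρ m) (etaCheckM γ ρbar 0), hbound ρ hρ m]
  have hyoung := mul_add_add_le_two_mul_sq_add_sq_add_sq |m / ρ| (ρ ^ ((γ - 1) / 2))
    (ρbar ^ ((γ - 1) / 2))
  rw [sq_abs, sq_rpow_half_s17 hρ.le, sq_rpow_half_s17 hρbar.le] at hyoung
  calc |m * (etaCheckM γ ρ m - etaCheckM γ ρbar 0)|
      ≤ ρ * |m / ρ| * (C * (|m / ρ| + ρ ^ ((γ - 1) / 2) + ρbar ^ ((γ - 1) / 2))) := by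
        rw [abs_mul, hm]
        gcongr
    _ = C * ρ * (|m / ρ| * (|m / ρ| + ρ ^ ((γ - 1) / 2) + ρbar ^ ((γ - 1) / 2))) := by ring
    _ ≤ C * ρ * (2 * ((m / ρ) ^ 2 + ρ ^ (γ - 1) + ρbar ^ (γ - 1))) := by gcongr
    _ = 2 * C * (ρ * (m / ρ) ^ 2 + ρ ^ γ + ρ * ρbar ^ (γ - 1)) := by
        rw [rpow_sub_one hρ.ne' γ]
        field_simp
    _ ≤ (2 * C + 1) * (ρ * (m / ρ) ^ 2 + ρ ^ γ + ρ * ρbar ^ (γ - 1)) := by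
        gcongr
        linarith

/-- there is `M > 0` depending only on `γ` such that for all `ρ̄ ∈ (0,1]`,
`ρ > 0`, `m ∈ ℝ` with `u = m/ρ`,
`|m η̃_m(ρ,m)| ≤ M(ρu² + ρ^γ + ρρ̄^{2θ})`, where `η̃_m(ρ,m) = η̌_m(ρ,m) − η̌_m(ρ̄,0)`. -/
theorem m_etaTildeM_bound (γ : ℝ) (hγ : 1 < γ) :
    ∃ M : ℝ, 0 < M ∧ ∀ ρbar ∈ Set.Ioc (0:ℝ) 1, ∀ ρ : ℝ, 0 < ρ → ∀ m : ℝ,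
      |m * (etaCheckM γ ρ m - etaCheckM γ ρbar 0)|
        ≤ M * (ρ * (m / ρ) ^ (2:ℕ) + ρ ^ γ + ρ * ρbar ^ (γ - 1)) := by
  obtain ⟨M, hM, hbound⟩ := m_etaTildeM_bound_general hγ
  exact ⟨M, hM, fun ρbar hρbar => hbound ρbar hρbar.1⟩
end
end
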